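/- Let $\mu$ be a positive Borel measure on $\mathbb{B}_n$, let $p, q > 0$, $s > 0$, $\alpha > -1$, $t > 0$, and assume there is $C > 0$ such that $\sup_{a \in \mathbb{B}_n} \int_{\mathbb{B}_n} |f(z)|^q \frac{(1-|a|^2)^t}{|1-\langle z,a\rangle|^{s+t}} \, d\mu(z) \le C \|f\|_{p,\alpha}^q$ for all $f \in A^p_\alpha$. Then for every $t_1 > 0$, $\sup_{a \in \mathbb{B}_n} \int_{\mathbb{B}_n} \frac{(1-|a|^2)^{t+t_1}}{|1-\langle z,a\rangle|^{s + (n+1+\alpha)q/p + t + t_1}} d\mu(z) < \infty$. -/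

import Mathlib

open MeasureTheory

noncomputable section

abbrev Cn (n : ℕ) := EuclideanSpace ℂ (Fin n)


noncomputable instance (n : ℕ) : MeasurableSpace (Cn n) := borel _
instance (n : ℕ) : BorelSpace (Cn n) := ⟨rfl⟩
noncomputable instance (n : ℕ) : MeasureSpace (Cn n) := ⟨MeasureTheory.Measure.addHaar⟩

def B (n : ℕ) : Set (Cn n) := Metric.ball 0 1

def bdot {n : ℕ} (z w : Cn n) : ℂ := ∑ j, z j * (starRingEnd ℂ) (w j)

def vol (n : ℕ) (α : ℝ) : Measure (Cn n) :=
  (volume.restrict (B n)).withDensity fun z => ENNReal.ofReal ((1 - ‖z‖ ^ 2) ^ α)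

def Hol {n : ℕ} (f : Cn n → ℂ) : Prop := DifferentiableOn ℂ f (B n)

def bNorm (n : ℕ) (p α : ℝ) (f : Cn n → ℂ) : ℝ :=
  (∫ z, ‖f z‖ ^ p ∂(vol n α)) ^ (1 / p)

def InBergman (n : ℕ) (p α : ℝ) (f : Cn n → ℂ) : Prop :=
  Hol f ∧ Integrable (fun z => ‖f z‖ ^ p) (vol n α)

def rderiv {n : ℕ} (f : Cn n → ℂ) (z : Cn n) : ℂ := fderiv ℂ f z z

def mob {n : ℕ} (a z : Cn n) : ℝ :=
  (1 - ‖a‖ ^ 2) * (1 - ‖z‖ ^ 2) / ‖(1 : ℂ) - bdot z a‖ ^ 2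

def rho {n : ℕ} (z w : Cn n) : ℝ := Real.sqrt (1 - mob z w)

def bergDist {n : ℕ} (z w : Cn n) : ℝ :=
  (1 / 2) * Real.log ((1 + rho z w) / (1 - rho z w))

def bergBall {n : ℕ} (a : Cn n) (r : ℝ) : Set (Cn n) := {w ∈ B n | bergDist a w < r}

def IsCarleson (n : ℕ) (lam γ : ℝ) (μ : Measure (Cn n)) : Prop :=
  ∀ p q : ℝ, 0 < p → 0 < q → q / p = lam →
    ∃ C > 0, ∀ f : Cn n → ℂ, InBergman n p γ f →
      ∫ z, ‖f z‖ ^ q ∂μ ≤ C * bNorm n p γ f ^ q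

def blochSet (n : ℕ) (α : ℝ) (f : Cn n → ℂ) : Set ℝ :=
  {x | ∃ z ∈ B n, x = ‖rderiv f z‖ * (1 - ‖z‖ ^ 2) ^ α}

def blochNorm (n : ℕ) (α : ℝ) (f : Cn n → ℂ) : ℝ := sSup (blochSet n α f)

def InBloch (n : ℕ) (α : ℝ) (f : Cn n → ℂ) : Prop :=
  Hol f ∧ BddAbove (blochSet n α f)

def Fint (n : ℕ) (p q s : ℝ) (f : Cn n → ℂ) (a : Cn n) : ℝ :=
  ∫ z in B n, ‖rderiv f z‖ ^ p * (1 - ‖z‖ ^ 2) ^ q * mob a z ^ s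

def FSet (n : ℕ) (p q s : ℝ) (f : Cn n → ℂ) : Set ℝ :=
  {x | ∃ a ∈ B n, x = Fint n p q s f a}

def FNorm (n : ℕ) (p q s : ℝ) (f : Cn n → ℂ) : ℝ := sSup (FSet n p q s f) ^ (1 / p)

def InF (n : ℕ) (p q s : ℝ) (f : Cn n → ℂ) : Prop :=
  Hol f ∧ BddAbove (FSet n p q s f)

def toeplitz (n : ℕ) (β : ℝ) (μ : Measure (Cn n)) (f : Cn n → ℂ) (z : Cn n) : ℂ :=
  ∫ w, f w / ((1 : ℂ) - bdot z w) ^ ((((n : ℝ) + 1 + β : ℝ)) : ℂ) ∂μ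

def carlSet (n : ℕ) (p q γ : ℝ) (μ : Measure (Cn n)) : Set ℝ :=
  {x | ∃ f : Cn n → ℂ, InBergman n p γ f ∧ bNorm n p γ f ≤ 1 ∧ x = ∫ z, ‖f z‖ ^ q ∂μ}

/-!
The hypothesis is tested on `f_a(z) = (1 - |a|²)^(t₁/q) (1 - ⟨z, a⟩)^(-(n+1+α)/p - t₁/q)`: the
factor `|f_a|^q` turns its kernel into the one of the conclusion, so only the uniform bound of
`‖f_a‖` in `A^p_α` is needed. That is the Forelli-Rudin estimate for
`∫ (1 - |z|²)^α |1 - ⟨z, a⟩|^(-(n+1+α+c))`. A unitary map moves `a` to `|a| e` with `|e| = 1`, and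
integrating out the directions orthogonal to `e` leaves the same kind of integral on the unit disc,
with weight exponent `α + n - 1`. In polar coordinates, `|1 - ρ e^(iθ)|` is comparable to
`1 - ρ + |θ|`, which bounds the angular integral; what remains is homogeneous in `1 - |a|²` up to a
convergent integral over `(0, ∞)`.
-/

open Module Set

section Scaling

variable {W : Type*} [NormedAddCommGroup W] [NormedSpace ℝ W] [FiniteDimensional ℝ W]
  [MeasurableSpace W] [BorelSpace W] (ν : Measure W) [ν.IsAddHaarMeasure]

lemma lintegral_comp_inv_smul (f : W → ENNReal) {b : ℝ} (hb : 0 < b) :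
    ∫⁻ w, f (b⁻¹ • w) ∂ν = ENNReal.ofReal (b ^ finrank ℝ W) * ∫⁻ w, f w ∂ν := by
  have hemb : MeasurableEmbedding fun w : W => b⁻¹ • w :=
    (Homeomorph.smulOfNeZero b⁻¹ (inv_ne_zero hb.ne')).measurableEmbedding
  rw [← hemb.lintegral_map, Measure.map_addHaar_smul ν (inv_ne_zero hb.ne'),
    lintegral_smul_measure, inv_pow, inv_inv, abs_of_pos (by positivity), smul_eq_mul]

lemma lintegral_add_norm_rpow {b : ℝ} (hb : 0 < b) (r : ℝ) :
    ∫⁻ w, ENNReal.ofReal ((b + ‖w‖) ^ (-r)) ∂ν =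
      ENNReal.ofReal (b ^ ((finrank ℝ W : ℝ) - r)) *
        ∫⁻ w, ENNReal.ofReal ((1 + ‖w‖) ^ (-r)) ∂ν := by
  have hscale (w : W) : (b + ‖w‖) ^ (-r) = b ^ (-r) * (1 + ‖b⁻¹ • w‖) ^ (-r) := by
    rw [norm_smul, Real.norm_of_nonneg (by positivity),
      ← Real.mul_rpow hb.le (by positivity), mul_add, mul_one, mul_inv_cancel_left₀ hb.ne']
  simp_rw [hscale, ENNReal.ofReal_mul (Real.rpow_nonneg hb.le (-r))]
  rw [lintegral_const_mul _ (by fun_prop),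
    lintegral_comp_inv_smul ν (fun w => ENNReal.ofReal ((1 + ‖w‖) ^ (-r))) hb,
    ← mul_assoc, ← ENNReal.ofReal_mul (by positivity), ← Real.rpow_natCast,
    ← Real.rpow_add hb, neg_add_eq_sub]

end Scaling

/-- The truncated power `u₊ ^ α`, equal to `0` for `u ≤ 0`. With it, integrals of
`(1 - ‖z‖ ^ 2) ^ α` over the unit ball become integrals over the whole space. -/
def truncPow (α u : ℝ) : ENNReal :=
  (Ioi 0).indicator (fun u => ENNReal.ofReal (u ^ α)) u

section TruncPow

variable {α β γ d R u : ℝ}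

lemma truncPow_of_pos (hu : 0 < u) : truncPow α u = ENNReal.ofReal (u ^ α) :=
  indicator_of_mem (mem_Ioi.2 hu) _

lemma truncPow_of_nonpos (hu : u ≤ 0) : truncPow α u = 0 :=
  indicator_of_notMem (notMem_Ioi.2 hu) _

@[fun_prop]
lemma measurable_truncPow (α : ℝ) : Measurable (truncPow α) :=
  (by fun_prop : Measurable fun u : ℝ => ENNReal.ofReal (u ^ α)).indicator measurableSet_Ioi

lemma truncPow_mul (hR : 0 < R) (u : ℝ) :
    truncPow α (R * u) = ENNReal.ofReal (R ^ α) * truncPow α u := by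
  rcases le_or_gt u 0 with hu | hu
  · rw [truncPow_of_nonpos hu, truncPow_of_nonpos (mul_nonpos_of_nonneg_of_nonpos hR.le hu),
      mul_zero]
  · rw [truncPow_of_pos hu, truncPow_of_pos (mul_pos hR hu), Real.mul_rpow hR.le hu.le,
      ENNReal.ofReal_mul (by positivity)]

lemma truncPow_mul_rpow_add (hd : 0 < d) (u : ℝ) :
    truncPow α u * ENNReal.ofReal ((d + u) ^ β) =
      ENNReal.ofReal (d ^ (α + β)) *
        (truncPow α (d⁻¹ * u) * ENNReal.ofReal ((1 + d⁻¹ * u) ^ β)) := by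
  obtain ⟨v, rfl⟩ : ∃ v, u = d * v := ⟨d⁻¹ * u, (mul_inv_cancel_left₀ hd.ne' u).symm⟩
  rw [inv_mul_cancel_left₀ hd.ne', truncPow_mul hd]
  rcases le_or_gt v 0 with hv | hv
  · simp [truncPow_of_nonpos hv]
  · rw [show d + d * v = d * (1 + v) by ring, Real.mul_rpow hd.le (by positivity),
      Real.rpow_add hd, ENNReal.ofReal_mul (by positivity), ENNReal.ofReal_mul (by positivity)]
    ring

lemma lintegral_truncPow_mul_add_rpow (hd : 0 < d) :
    ∫⁻ u, truncPow α u * ENNReal.ofReal ((d + u) ^ (-(1 + α + γ))) =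
      ENNReal.ofReal (d ^ (-γ)) *
        ∫⁻ u, truncPow α u * ENNReal.ofReal ((1 + u) ^ (-(1 + α + γ))) := by
  simp_rw [truncPow_mul_rpow_add hd, ← smul_eq_mul (a := d⁻¹)]
  rw [lintegral_const_mul _ (by fun_prop), lintegral_comp_inv_smul volume
    (fun u : ℝ => truncPow α u * ENNReal.ofReal ((1 + u) ^ (-(1 + α + γ)))) hd,
    finrank_self, pow_one, ← mul_assoc, ← ENNReal.ofReal_mul (by positivity),
    ← Real.rpow_add_one hd.ne']
  congr 3
  ring

lemma integrableOn_Ioi_rpow_mul_one_add_rpow (hα : -1 < α) (hγ : 0 < γ) :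
    IntegrableOn (fun u : ℝ => u ^ α * (1 + u) ^ (-(1 + α + γ))) (Ioi 0) := by
  rw [← Ioc_union_Ioi_eq_Ioi zero_le_one]
  have hmeas : Measurable fun u : ℝ => u ^ α * (1 + u) ^ (-(1 + α + γ)) := by fun_prop
  refine IntegrableOn.union
    (Integrable.mono' (g := fun u => u ^ α) (intervalIntegral.intervalIntegrable_rpow' hα).1
      hmeas.aestronglyMeasurable (ae_restrict_of_forall_mem measurableSet_Ioc fun u hu => ?_))
    (Integrable.mono' (g := fun u => u ^ (-(1 + γ)))
      (integrableOn_Ioi_rpow_of_lt (by linarith) one_pos)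
      hmeas.aestronglyMeasurable (ae_restrict_of_forall_mem measurableSet_Ioi fun u hu => ?_))
  · have hu0 : 0 < u := hu.1
    rw [Real.norm_of_nonneg (by positivity)]
    exact mul_le_of_le_one_right (by positivity)
      (Real.rpow_le_one_of_one_le_of_nonpos (by linarith) (by linarith))
  · have hu0 : 0 < u := one_pos.trans hu
    rw [Real.norm_of_nonneg (by positivity)]
    calc u ^ α * (1 + u) ^ (-(1 + α + γ)) ≤ u ^ α * u ^ (-(1 + α + γ)) := by
          gcongr ?_ * ?_
          exact Real.rpow_le_rpow_of_nonpos hu0 (by linarith) (by linarith)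
      _ = u ^ (-(1 + γ)) := by
          rw [← Real.rpow_add hu0]
          ring_nf

lemma lintegral_truncPow_mul_one_add_rpow_lt_top (hα : -1 < α) (hγ : 0 < γ) :
    ∫⁻ u, truncPow α u * ENNReal.ofReal ((1 + u) ^ (-(1 + α + γ))) < ⊤ := by
  refine lt_of_eq_of_lt ?_ (integrableOn_Ioi_rpow_mul_one_add_rpow hα hγ).lintegral_lt_top
  rw [← lintegral_indicator measurableSet_Ioi]
  refine lintegral_congr fun u => ?_
  rcases le_or_gt u 0 with hu | hu
  · rw [truncPow_of_nonpos hu, zero_mul, indicator_of_notMem (notMem_Ioi.2 hu)]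
  · rw [truncPow_of_pos hu, indicator_of_mem (mem_Ioi.2 hu), ENNReal.ofReal_mul (by positivity)]

end TruncPow

section Ball

lemma lintegral_truncPow_one_sub_norm_sq_mul {W : Type*} [NormedAddCommGroup W]
    [MeasurableSpace W] [BorelSpace W] (ν : Measure W) (α : ℝ) (F : W → ENNReal) :
    ∫⁻ w, truncPow α (1 - ‖w‖ ^ 2) * F w ∂ν =
      ∫⁻ w in Metric.ball 0 1, ENNReal.ofReal ((1 - ‖w‖ ^ 2) ^ α) * F w ∂ν := by
  rw [← lintegral_indicator measurableSet_ball]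
  refine lintegral_congr fun w => ?_
  by_cases hw : w ∈ Metric.ball (0 : W) 1
  · rw [indicator_of_mem hw, truncPow_of_pos]
    rw [mem_ball_zero_iff] at hw
    exact sub_pos.2 ((sq_lt_one_iff₀ (norm_nonneg w)).2 hw)
  · rw [indicator_of_notMem hw, truncPow_of_nonpos, zero_mul]
    rw [mem_ball_zero_iff, not_lt] at hw
    exact sub_nonpos.2 (one_le_pow₀ hw)

variable {W : Type*} [NormedAddCommGroup W] [NormedSpace ℝ W] [FiniteDimensional ℝ W]
  [MeasurableSpace W] [BorelSpace W] (ν : Measure W) [ν.IsAddHaarMeasure] {α : ℝ}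

lemma lintegral_truncPow_sub_norm_sq (α R : ℝ) :
    ∫⁻ w, truncPow α (R - ‖w‖ ^ 2) ∂ν =
      truncPow (α + finrank ℝ W / 2) R * ∫⁻ w, truncPow α (1 - ‖w‖ ^ 2) ∂ν := by
  rcases le_or_gt R 0 with hR | hR
  · have hzero (w : W) : truncPow α (R - ‖w‖ ^ 2) = 0 :=
      truncPow_of_nonpos (by linarith [sq_nonneg ‖w‖])
    simp [hzero, truncPow_of_nonpos hR]
  have hb : 0 < √R := Real.sqrt_pos.2 hR
  have hscale (w : W) : R - ‖w‖ ^ 2 = R * (1 - ‖(√R)⁻¹ • w‖ ^ 2) := by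
    rw [norm_smul, mul_pow, norm_inv, Real.norm_of_nonneg hb.le, inv_pow, Real.sq_sqrt hR.le,
      mul_sub, mul_one, mul_inv_cancel_left₀ hR.ne']
  simp_rw [hscale, truncPow_mul hR]
  rw [lintegral_const_mul _ (by fun_prop),
    lintegral_comp_inv_smul ν (fun w => truncPow α (1 - ‖w‖ ^ 2)) hb, truncPow_of_pos hR,
    ← mul_assoc, ← ENNReal.ofReal_mul (by positivity), Real.sqrt_eq_rpow, ← Real.rpow_natCast,
    ← Real.rpow_mul hR.le, ← Real.rpow_add hR, one_div_mul_eq_div]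

lemma integrableOn_ball_one_sub_norm_sq_rpow (hα : -1 < α) :
    IntegrableOn (fun w => (1 - ‖w‖ ^ 2) ^ α) (Metric.ball 0 1) ν := by
  rcases subsingleton_or_nontrivial W with hW | hW
  · refine (integrableOn_const (C := (1 : ℝ)) measure_ball_lt_top.ne).congr_fun (fun w _ => ?_)
      measurableSet_ball
    simp [Subsingleton.elim w 0]
  rw [integrableOn_fun_norm_addHaar ν (f := fun y => (1 - y ^ 2) ^ α)]
  have hsing : IntervalIntegrable (fun y : ℝ => (1 - y) ^ α) volume 0 1 := by
    simpa using ((intervalIntegral.intervalIntegrable_rpow' (a := 0) (b := 1) hα).comp_sub_left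
      1).symm
  have hcont : ContinuousOn (fun y : ℝ => y ^ (finrank ℝ W - 1) * (1 + y) ^ α) (uIcc 0 1) := by
    refine (continuous_pow _).continuousOn.mul
      (ContinuousOn.rpow_const (by fun_prop) fun y hy => Or.inl ?_)
    rw [uIcc_of_le zero_le_one] at hy
    linarith [hy.1]
  refine (((intervalIntegrable_iff_integrableOn_Ioc_of_le zero_le_one).1
    (hsing.mul_continuousOn hcont)).mono_set Ioo_subset_Ioc_self).congr_fun (fun y hy => ?_)
    measurableSet_Ioo
  have hfactor : (1 - y ^ 2) ^ α = (1 - y) ^ α * (1 + y) ^ α := by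
    rw [← Real.mul_rpow (by linarith [hy.2]) (by linarith [hy.1])]
    ring_nf
  simp only [hfactor, smul_eq_mul]
  ring

lemma lintegral_truncPow_one_sub_norm_sq_lt_top (hα : -1 < α) :
    ∫⁻ w, truncPow α (1 - ‖w‖ ^ 2) ∂ν < ⊤ := by
  have h := lintegral_truncPow_one_sub_norm_sq_mul ν α (fun _ => 1)
  simp only [mul_one] at h
  exact h ▸ (integrableOn_ball_one_sub_norm_sq_rpow ν hα).lintegral_lt_top

end Ball

section Disc

variable {ρ θ r c β : ℝ}

lemma lintegral_complex_eq_polar {F : ℂ → ENNReal} (hF : Measurable F) :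
    ∫⁻ ζ, F ζ = ∫⁻ s in Ioi (0 : ℝ), ENNReal.ofReal s *
      ∫⁻ θ in Ioo (-Real.pi) Real.pi, F (s * Complex.exp (Complex.I * θ)) := by
  have hpolar (v : ℝ × ℝ) :
      Complex.polarCoord.symm v = v.1 * Complex.exp (Complex.I * v.2) := by
    rw [Complex.polarCoord_symm_apply, mul_comm Complex.I, Complex.exp_mul_I]
    push_cast
    rfl
  rw [← Complex.lintegral_comp_polarCoord_symm, polarCoord_target, Measure.volume_eq_prod,
    ← Measure.prod_restrict]
  simp_rw [hpolar, smul_eq_mul]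
  rw [lintegral_prod (fun v : ℝ × ℝ => ENNReal.ofReal v.1 *
    F (v.1 * Complex.exp (Complex.I * v.2))) (by fun_prop)]
  refine lintegral_congr fun s => ?_
  dsimp only
  rw [lintegral_const_mul _ (by fun_prop)]

lemma one_sub_add_abs_le_norm_one_sub_mul_exp (hρ0 : 0 ≤ ρ) (hρ1 : ρ ≤ 1)
    (hθ : |θ| ≤ Real.pi) :
    (1 - ρ + |θ|) / (2 * Real.pi) ≤ ‖1 - ρ * Complex.exp (Complex.I * θ)‖ := by
  set e := Complex.exp (Complex.I * θ)
  have he : ‖e‖ = 1 := Complex.norm_exp_I_mul_ofReal θ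
  have hradial : 1 - ρ ≤ ‖1 - ρ * e‖ := by
    simpa [he, abs_of_nonneg hρ0] using norm_sub_norm_le 1 (ρ * e)
  have hchord : 2 * |θ| / Real.pi ≤ ‖e - 1‖ := by
    have hsin := Real.mul_abs_le_abs_sin (x := θ / 2) (by rw [abs_div, abs_two]; linarith)
    rw [Complex.norm_exp_I_mul_ofReal_sub_one, norm_mul, Real.norm_two, Real.norm_eq_abs]
    rw [abs_div, abs_two] at hsin
    calc 2 * |θ| / Real.pi = 2 * (2 / Real.pi * (|θ| / 2)) := by ring
      _ ≤ 2 * |Real.sin (θ / 2)| := by gcongr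
  have htriangle : ‖e - 1‖ ≤ ‖1 - ρ * e‖ + (1 - ρ) := by
    calc ‖e - 1‖ = ‖(1 - ρ : ℝ) * e - (1 - ρ * e)‖ := by push_cast; ring_nf
      _ ≤ ‖((1 - ρ : ℝ) : ℂ) * e‖ + ‖1 - ρ * e‖ := norm_sub_le _ _
      _ = ‖1 - ρ * e‖ + (1 - ρ) := by
          rw [norm_mul, he, mul_one, Complex.norm_of_nonneg (by linarith), add_comm]
  have hangle : |θ| / Real.pi ≤ ‖1 - ρ * e‖ := by
    rw [mul_div_assoc] at hchord
    linarith
  have hpi : (1 - ρ) / Real.pi ≤ 1 - ρ :=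
    div_le_self (by linarith) (by linarith [Real.pi_gt_three])
  calc (1 - ρ + |θ|) / (2 * Real.pi) = ((1 - ρ) / Real.pi + |θ| / Real.pi) / 2 := by
        field_simp
    _ ≤ ‖1 - ρ * e‖ := by linarith

lemma exists_lintegral_angle_le (hc : 1 < c) : ∃ K : ENNReal, K ≠ ⊤ ∧ ∀ ρ : ℝ, 0 ≤ ρ → ρ < 1 →
    ∫⁻ θ in Ioo (-Real.pi) Real.pi,
      ENNReal.ofReal (‖1 - ρ * Complex.exp (Complex.I * θ)‖ ^ (-c)) ≤
        K * ENNReal.ofReal ((1 - ρ) ^ (1 - c)) := by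
  set J : ENNReal := ∫⁻ θ : ℝ, ENNReal.ofReal ((1 + ‖θ‖) ^ (-c))
  have hJ : J ≠ ⊤ := (finite_integral_one_add_norm (by simpa using hc)).ne
  refine ⟨ENNReal.ofReal ((2 * Real.pi) ^ c) * J, ENNReal.mul_ne_top ENNReal.ofReal_ne_top hJ,
    fun ρ hρ0 hρ1 => ?_⟩
  have hρ : 0 < 1 - ρ := sub_pos.2 hρ1
  calc _ ≤ ∫⁻ θ : ℝ in Ioo (-Real.pi) Real.pi, ENNReal.ofReal ((2 * Real.pi) ^ c) *
        ENNReal.ofReal ((1 - ρ + ‖θ‖) ^ (-c)) := by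
        refine setLIntegral_mono' measurableSet_Ioo fun θ hθ => ?_
        rw [← ENNReal.ofReal_mul (by positivity)]
        refine ENNReal.ofReal_le_ofReal ((Real.rpow_le_rpow_of_nonpos (by positivity)
          (one_sub_add_abs_le_norm_one_sub_mul_exp hρ0 hρ1.le (abs_lt.2 hθ).le)
          (by linarith)).trans_eq ?_)
        rw [Real.div_rpow (by positivity) (by positivity),
          Real.rpow_neg (by positivity : 0 ≤ 2 * Real.pi), div_inv_eq_mul, mul_comm,
          Real.norm_eq_abs]
    _ ≤ ∫⁻ θ : ℝ, ENNReal.ofReal ((2 * Real.pi) ^ c) *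
        ENNReal.ofReal ((1 - ρ + ‖θ‖) ^ (-c)) :=
        setLIntegral_le_lintegral _ _
    _ = _ := by
        rw [lintegral_const_mul _ (by fun_prop), lintegral_add_norm_rpow volume hρ, finrank_self,
          Nat.cast_one]
        ring

lemma lintegral_Ioi_mul_comp_one_sub_sq_le (G : ℝ → ENNReal) :
    ∫⁻ s in Ioi (0 : ℝ), ENNReal.ofReal s * G (1 - s ^ 2) ≤ ∫⁻ u, G u := by
  have hderiv (s : ℝ) : HasDerivWithinAt (fun s : ℝ => 1 - s ^ 2) (-(2 * s)) (Ioi 0) s := by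
    simpa using ((hasDerivAt_pow 2 s).const_sub 1).hasDerivWithinAt
  have hinj : InjOn (fun s : ℝ => 1 - s ^ 2) (Ioi 0) := fun x hx y hy hxy =>
    (pow_left_inj₀ (mem_Ioi.1 hx).le (mem_Ioi.1 hy).le two_ne_zero).1 (sub_right_inj.1 hxy)
  calc ∫⁻ s in Ioi (0 : ℝ), ENNReal.ofReal s * G (1 - s ^ 2)
      ≤ ∫⁻ s in Ioi (0 : ℝ), ENNReal.ofReal |-(2 * s)| * G (1 - s ^ 2) := by
        refine setLIntegral_mono' measurableSet_Ioi fun s hs => ?_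
        gcongr
        rw [abs_neg, abs_of_pos (mul_pos two_pos hs)]
        linarith [mem_Ioi.1 hs]
    _ = ∫⁻ u in (fun s : ℝ => 1 - s ^ 2) '' Ioi 0, G u :=
        (lintegral_image_eq_lintegral_abs_deriv_mul measurableSet_Ioi (fun s _ => hderiv s)
          hinj G).symm
    _ ≤ ∫⁻ u, G u := setLIntegral_le_lintegral _ _

lemma one_sub_mul_rpow_le {s γ : ℝ} (hr0 : 0 ≤ r) (hr1 : r < 1) (hs0 : 0 ≤ s) (hs1 : s < 1)
    (hγ : γ ≤ 0) : (1 - r * s) ^ γ ≤ 4 ^ (-γ) * (1 - r ^ 2 + (1 - s ^ 2)) ^ γ := by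
  have hbase : 0 < 1 - r ^ 2 + (1 - s ^ 2) := by nlinarith
  have hle : (1 - r ^ 2 + (1 - s ^ 2)) / 4 ≤ 1 - r * s := by nlinarith [sq_nonneg (r - s)]
  refine (Real.rpow_le_rpow_of_nonpos (by positivity) hle hγ).trans_eq ?_
  rw [Real.div_rpow hbase.le (by norm_num), Real.rpow_neg (by norm_num), div_eq_inv_mul]

lemma exists_lintegral_circle_kernel_le (hc : 1 < c) : ∃ K : ENNReal, K ≠ ⊤ ∧
    ∀ r s : ℝ, 0 ≤ r → r < 1 → 0 ≤ s → s < 1 →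
      ∫⁻ θ in Ioo (-Real.pi) Real.pi,
        ENNReal.ofReal (‖1 - r * (s * Complex.exp (Complex.I * θ))‖ ^ (-c)) ≤
          K * ENNReal.ofReal ((1 - r ^ 2 + (1 - s ^ 2)) ^ (1 - c)) := by
  obtain ⟨A, hA, hangle⟩ := exists_lintegral_angle_le hc
  refine ⟨A * ENNReal.ofReal (4 ^ (-(1 - c))), ENNReal.mul_ne_top hA ENNReal.ofReal_ne_top,
    fun r s hr0 hr1 hs0 hs1 => ?_⟩
  simp_rw [← mul_assoc, ← Complex.ofReal_mul]
  calc _ ≤ A * ENNReal.ofReal ((1 - r * s) ^ (1 - c)) :=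
        hangle _ (by positivity) (mul_lt_one_of_nonneg_of_lt_one_left hr0 hr1 hs1.le)
    _ ≤ A * ENNReal.ofReal (4 ^ (-(1 - c)) * (1 - r ^ 2 + (1 - s ^ 2)) ^ (1 - c)) := by
        gcongr
        exact one_sub_mul_rpow_le hr0 hr1 hs0 hs1 (by linarith)
    _ = _ := by rw [ENNReal.ofReal_mul (by positivity), mul_assoc]

lemma exists_lintegral_disc_kernel_le (hβ : -1 < β) (hc : 0 < c) :
    ∃ K : ENNReal, K ≠ ⊤ ∧ ∀ r : ℝ, 0 ≤ r → r < 1 →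
      ∫⁻ ζ : ℂ, truncPow β (1 - ‖ζ‖ ^ 2) * ENNReal.ofReal (‖1 - r * ζ‖ ^ (-(2 + β + c))) ≤
        K * ENNReal.ofReal ((1 - r ^ 2) ^ (-c)) := by
  obtain ⟨A, hA, hcircle⟩ := exists_lintegral_circle_kernel_le (c := 2 + β + c) (by linarith)
  rw [show 1 - (2 + β + c) = -(1 + β + c) by ring] at hcircle
  refine ⟨A * ∫⁻ u, truncPow β u * ENNReal.ofReal ((1 + u) ^ (-(1 + β + c))),
    ENNReal.mul_ne_top hA (lintegral_truncPow_mul_one_add_rpow_lt_top hβ hc).ne,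
    fun r hr0 hr1 => ?_⟩
  have hd : 0 < 1 - r ^ 2 := sub_pos.2 ((sq_lt_one_iff₀ hr0).2 hr1)
  let G (u : ℝ) : ENNReal :=
    A * (truncPow β u * ENNReal.ofReal ((1 - r ^ 2 + u) ^ (-(1 + β + c))))
  have hG : ∀ s ∈ Ioi (0 : ℝ), ∫⁻ θ in Ioo (-Real.pi) Real.pi,
      truncPow β (1 - ‖s * Complex.exp (Complex.I * θ)‖ ^ 2) * ENNReal.ofReal
        (‖1 - r * (s * Complex.exp (Complex.I * θ))‖ ^ (-(2 + β + c))) ≤ G (1 - s ^ 2) := by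
    intro s hs
    have hs0 : 0 ≤ s := (mem_Ioi.1 hs).le
    simp_rw [norm_mul (s : ℂ), Complex.norm_exp_I_mul_ofReal, mul_one, Complex.norm_of_nonneg hs0]
    rw [lintegral_const_mul _ (by fun_prop)]
    rcases le_or_gt 1 s with hs1 | hs1
    · simp [truncPow_of_nonpos (sub_nonpos.2 (one_le_pow₀ hs1 : 1 ≤ s ^ 2))]
    refine (mul_le_mul_right (hcircle r s hr0 hr1 hs0 hs1) _).trans_eq ?_
    simp only [G]
    ring
  calc _ ≤ ∫⁻ s in Ioi (0 : ℝ), ENNReal.ofReal s * G (1 - s ^ 2) := by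
        rw [lintegral_complex_eq_polar (by fun_prop)]
        exact setLIntegral_mono' measurableSet_Ioi fun s hs => by gcongr; exact hG s hs
    _ ≤ ∫⁻ u, G u := lintegral_Ioi_mul_comp_one_sub_sq_le G
    _ = _ := by
        rw [lintegral_const_mul _ (by fun_prop), lintegral_truncPow_mul_add_rpow hd]
        ring

end Disc

section ForelliRudin

lemma measurePreserving_linearIsometryEquiv {𝕜 W : Type*}
    [NontriviallyNormedField 𝕜] [NormedAddCommGroup W] [NormedSpace 𝕜 W] [ProperSpace W]
    [MeasurableSpace W] [BorelSpace W] (ν : Measure W) [ν.IsAddHaarMeasure] (U : W ≃ₗᵢ[𝕜] W) :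
    MeasurePreserving U ν ν := by
  refine ⟨U.continuous.measurable, ?_⟩
  have hHaar : (Measure.map U ν).IsAddHaarMeasure :=
    U.toContinuousLinearEquiv.isAddHaarMeasure_map ν
  have hsmul := Measure.isAddLeftInvariant_eq_smul (Measure.map U ν) ν
  have hball : Measure.map U ν (Metric.ball 0 1) = ν (Metric.ball 0 1) := by
    rw [Measure.map_apply U.continuous.measurable measurableSet_ball,
      U.preimage_ball, map_zero]
  have hone : ((Measure.map U ν).addHaarScalarFactor ν : ENNReal) = 1 := by
    rw [hsmul, Measure.smul_apply] at hball
    exact (ENNReal.mul_eq_right (Metric.measure_ball_pos ν 0 one_pos).ne'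
      measure_ball_lt_top.ne).1 hball
  rw [hsmul, ENNReal.coe_eq_one.1 hone, one_smul]

variable {E : Type*} [NormedAddCommGroup E] [InnerProductSpace ℂ E]

lemma exists_coordinates_along {e : E} (he : ‖e‖ = 1) :
    ∃ Φ : E ≃L[ℂ] ℂ × (ℂ ∙ e)ᗮ, ∀ z, (Φ z).1 = inner ℂ e z ∧
      ‖z‖ ^ 2 = ‖(Φ z).1‖ ^ 2 + ‖(Φ z).2‖ ^ 2 := by
  let κ := LinearIsometryEquiv.toSpanUnitSingleton (𝕜 := ℂ) e he
  let Φ : E ≃L[ℂ] ℂ × (ℂ ∙ e)ᗮ :=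
    ((ℂ ∙ e).orthogonalDecomposition.toContinuousLinearEquiv.trans
      (WithLp.prodContinuousLinearEquiv 2 ℂ (ℂ ∙ e) (ℂ ∙ e)ᗮ)).trans
      (κ.symm.toContinuousLinearEquiv.prodCongr (ContinuousLinearEquiv.refl ℂ _))
  have hfst (z : E) : (Φ z).1 = κ.symm ((ℂ ∙ e).orthogonalProjectionOnto z) := by
    simp [Φ]
  have hsnd (z : E) : (Φ z).2 = (ℂ ∙ e)ᗮ.orthogonalProjectionOnto z := by
    simp [Φ]
  refine ⟨Φ, fun z => ⟨?_, ?_⟩⟩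
  · rw [hfst, LinearIsometryEquiv.symm_apply_eq]
    ext
    rw [Submodule.coe_orthogonalProjectionOnto_apply]
    simp [κ, Submodule.starProjection_unit_singleton ℂ he]
  · rw [hfst, hsnd, LinearIsometryEquiv.norm_map]
    exact (ℂ ∙ e).norm_sq_eq_add_norm_sq_projection z

variable [FiniteDimensional ℂ E]

lemma exists_linearIsometryEquiv_map_eq {e e' : E} (he : ‖e‖ = 1) (he' : ‖e'‖ = 1) :
    ∃ U : E ≃ₗᵢ[ℂ] E, U e = e' := by
  have : Nontrivial E := ⟨e, 0, norm_ne_zero_iff.1 (by simp [he])⟩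
  let i₀ : Fin (finrank ℂ E) := ⟨0, finrank_pos⟩
  have hbasis {v : E} (hv : ‖v‖ = 1) :
      ∃ b : OrthonormalBasis (Fin (finrank ℂ E)) ℂ E, b i₀ = v := by
    obtain ⟨b, hb⟩ := Orthonormal.exists_orthonormalBasis_extension_of_card_eq (𝕜 := ℂ)
      (Fintype.card_fin _).symm (v := fun _ => v) (s := {i₀})
      ⟨fun _ => hv, fun i j hij => (hij (Subsingleton.elim i j)).elim⟩
    exact ⟨b, hb i₀ rfl⟩
  obtain ⟨b, rfl⟩ := hbasis he
  obtain ⟨b', rfl⟩ := hbasis he'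
  exact ⟨b.equiv b' (Equiv.refl _), by simp⟩

lemma exists_linearIsometryEquiv_map_eq_norm_smul {e : E} (he : ‖e‖ = 1) (a : E) :
    ∃ U : E ≃ₗᵢ[ℂ] E, U a = (‖a‖ : ℂ) • e := by
  rcases eq_or_ne a 0 with rfl | ha
  · exact ⟨LinearIsometryEquiv.refl ℂ E, by simp⟩
  obtain ⟨U, hU⟩ := exists_linearIsometryEquiv_map_eq (e := (‖a‖ : ℂ)⁻¹ • a)
    (norm_smul_inv_norm ha) he
  refine ⟨U, ?_⟩
  rw [← hU, map_smul, smul_smul,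
    mul_inv_cancel₀ (Complex.ofReal_ne_zero.2 (norm_ne_zero_iff.2 ha)), one_smul]

variable [MeasurableSpace E] [BorelSpace E] (μ : Measure E) [μ.IsAddHaarMeasure] {α c : ℝ}

lemma exists_lintegral_truncPow_mul_inner_eq {e : E} (he : ‖e‖ = 1) (hα : -1 < α) :
    ∃ κ : ENNReal, κ ≠ ⊤ ∧ ∀ f : ℂ → ENNReal, Measurable f →
      ∫⁻ z, truncPow α (1 - ‖z‖ ^ 2) * f (inner ℂ e z) ∂μ =
        κ * ∫⁻ ζ : ℂ, truncPow (α + finrank ℂ E - 1) (1 - ‖ζ‖ ^ 2) * f ζ := by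
  obtain ⟨Φ, hΦ⟩ := exists_coordinates_along he
  let ν : Measure (ℂ ∙ e)ᗮ := Measure.addHaar
  let π : Measure (ℂ × (ℂ ∙ e)ᗮ) := (volume : Measure ℂ).prod ν
  have hHaar : (Measure.map Φ μ).IsAddHaarMeasure :=
    Φ.isAddHaarMeasure_map μ
  have hmap := Measure.isAddLeftInvariant_eq_smul (Measure.map Φ μ) π
  set k := (Measure.map Φ μ).addHaarScalarFactor π
  have hexp : α + (finrank ℝ (ℂ ∙ e)ᗮ : ℝ) / 2 = α + finrank ℂ E - 1 := by
    have he0 : e ≠ 0 := norm_ne_zero_iff.1 (by simp [he])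
    rw [finrank_real_of_complex, ← (ℂ ∙ e).finrank_add_finrank_orthogonal,
      finrank_span_singleton he0]
    push_cast
    ring
  refine ⟨k * ∫⁻ w, truncPow α (1 - ‖w‖ ^ 2) ∂ν, ENNReal.mul_ne_top ENNReal.coe_ne_top
    (lintegral_truncPow_one_sub_norm_sq_lt_top ν hα).ne, fun f hf => ?_⟩
  have hslice (ζ : ℂ) : ∫⁻ w, truncPow α (1 - (‖ζ‖ ^ 2 + ‖w‖ ^ 2)) * f ζ ∂ν =
      (∫⁻ w, truncPow α (1 - ‖w‖ ^ 2) ∂ν) *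
        (truncPow (α + finrank ℂ E - 1) (1 - ‖ζ‖ ^ 2) * f ζ) := by
    simp_rw [← sub_sub]
    rw [lintegral_mul_const _ (by fun_prop), lintegral_truncPow_sub_norm_sq, hexp]
    ring
  calc ∫⁻ z, truncPow α (1 - ‖z‖ ^ 2) * f (inner ℂ e z) ∂μ
      = ∫⁻ z, truncPow α (1 - (‖(Φ z).1‖ ^ 2 + ‖(Φ z).2‖ ^ 2)) * f (Φ z).1 ∂μ := by
        refine lintegral_congr fun z => ?_
        rw [← (hΦ z).2, (hΦ z).1]
    _ = ∫⁻ v, truncPow α (1 - (‖v.1‖ ^ 2 + ‖v.2‖ ^ 2)) * f v.1 ∂(Measure.map Φ μ) := by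
        rw [lintegral_map (by fun_prop) Φ.continuous.measurable]
    _ = k * ∫⁻ ζ : ℂ, ∫⁻ w, truncPow α (1 - (‖ζ‖ ^ 2 + ‖w‖ ^ 2)) * f ζ ∂ν := by
        rw [hmap, lintegral_smul_measure, lintegral_prod _ (by fun_prop)]
        rfl
    _ = _ := by
        simp_rw [hslice]
        rw [lintegral_const_mul _ (by fun_prop), mul_assoc]

theorem exists_forelliRudin_le (hα : -1 < α) (hc : 0 < c) :
    ∃ K : ENNReal, K ≠ ⊤ ∧ ∀ a : E, ‖a‖ < 1 →
      ∫⁻ z, truncPow α (1 - ‖z‖ ^ 2) *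
        ENNReal.ofReal (‖1 - inner ℂ a z‖ ^ (-(finrank ℂ E + 1 + α + c))) ∂μ ≤
          K * ENNReal.ofReal ((1 - ‖a‖ ^ 2) ^ (-c)) := by
  rcases subsingleton_or_nontrivial E with hE | hE
  · refine ⟨_, (lintegral_truncPow_one_sub_norm_sq_lt_top μ hα).ne, fun a _ => ?_⟩
    simp [Subsingleton.elim a 0]
  obtain ⟨e, he⟩ := exists_norm_eq E zero_le_one
  obtain ⟨κ, hκ, hslice⟩ := exists_lintegral_truncPow_mul_inner_eq μ he hα
  have hdim : (1 : ℝ) ≤ finrank ℂ E := Nat.one_le_cast.2 finrank_pos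
  obtain ⟨K, hK, hdisc⟩ := exists_lintegral_disc_kernel_le
    (β := α + finrank ℂ E - 1) (c := c) (by linarith) hc
  refine ⟨κ * K, ENNReal.mul_ne_top hκ hK, fun a ha => ?_⟩
  obtain ⟨U, hU⟩ := exists_linearIsometryEquiv_map_eq_norm_smul he a
  have hinner (z : E) : inner ℂ a z = ‖a‖ * inner ℂ e (U z) := by
    rw [← U.inner_map_map, hU, inner_smul_left, Complex.conj_ofReal]
  set N : ℝ := finrank ℂ E + 1 + α + c
  let f : ℂ → ENNReal := fun ζ => ENNReal.ofReal (‖1 - ‖a‖ * ζ‖ ^ (-N))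
  calc _ = ∫⁻ z, truncPow α (1 - ‖U z‖ ^ 2) * f (inner ℂ e (U z)) ∂μ := by
        simp_rw [hinner, U.norm_map, f]
    _ = ∫⁻ z, truncPow α (1 - ‖z‖ ^ 2) * f (inner ℂ e z) ∂μ :=
        (measurePreserving_linearIsometryEquiv μ U).lintegral_comp
          (f := fun z => truncPow α (1 - ‖z‖ ^ 2) * f (inner ℂ e z)) (by fun_prop)
    _ = κ * ∫⁻ ζ : ℂ, truncPow (α + finrank ℂ E - 1) (1 - ‖ζ‖ ^ 2) * f ζ :=
        hslice f (by fun_prop)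
    _ ≤ κ * (K * ENNReal.ofReal ((1 - ‖a‖ ^ 2) ^ (-c))) := by
        gcongr
        have := hdisc ‖a‖ (norm_nonneg a) ha
        rwa [show 2 + (α + finrank ℂ E - 1) + c = N by ring] at this
    _ = κ * K * ENNReal.ofReal ((1 - ‖a‖ ^ 2) ^ (-c)) := (mul_assoc _ _ _).symm

end ForelliRudin

section Bergman

variable {n : ℕ}

instance (n : ℕ) : (volume : Measure (Cn n)).IsAddHaarMeasure :=
  inferInstanceAs Measure.addHaar.IsAddHaarMeasure

lemma bdot_eq_inner (z a : Cn n) : bdot z a = inner ℂ a z := by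
  simp [bdot, PiLp.inner_apply]

lemma one_sub_norm_sq_pos {a : Cn n} (ha : a ∈ B n) : 0 < 1 - ‖a‖ ^ 2 :=
  sub_pos.2 ((sq_lt_one_iff₀ (norm_nonneg a)).2 (mem_ball_zero_iff.1 ha))

lemma one_sub_bdot_mem_slitPlane {z a : Cn n} (hz : z ∈ B n) (ha : a ∈ B n) :
    1 - bdot z a ∈ Complex.slitPlane := by
  rw [B, mem_ball_zero_iff] at hz ha
  rw [sub_eq_add_neg, bdot_eq_inner]
  refine Complex.mem_slitPlane_of_norm_lt_one ?_
  rw [norm_neg]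
  exact (norm_inner_le_norm a z).trans_lt
    (mul_lt_one_of_nonneg_of_lt_one_left (norm_nonneg a) ha hz.le)

lemma lintegral_vol (α : ℝ) {F : Cn n → ENNReal} (hF : Measurable F) :
    ∫⁻ z, F z ∂(vol n α) = ∫⁻ z, truncPow α (1 - ‖z‖ ^ 2) * F z := by
  rw [vol, lintegral_withDensity_eq_lintegral_mul _ (by fun_prop) hF,
    lintegral_truncPow_one_sub_norm_sq_mul]
  rfl

/-- The normalized power `(1 - |a|²)^β (1 - ⟨z, a⟩)^(-N)` of the Bergman kernel at `a`, with
which integral inequalities over `A^p_α` are tested. -/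
def testFun (β N : ℝ) (a z : Cn n) : ℂ :=
  ((1 - ‖a‖ ^ 2) ^ β : ℝ) * (1 - bdot z a) ^ ((-N : ℝ) : ℂ)

lemma norm_testFun_rpow (β N q : ℝ) {a : Cn n} (ha : a ∈ B n) (z : Cn n) :
    ‖testFun β N a z‖ ^ q =
      (1 - ‖a‖ ^ 2) ^ (β * q) * ‖1 - bdot z a‖ ^ (-(N * q)) := by
  have hd := one_sub_norm_sq_pos ha
  rw [testFun, norm_mul, Complex.norm_cpow_real, Complex.norm_real,
    Real.norm_of_nonneg (by positivity), Real.mul_rpow (by positivity) (by positivity),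
    ← Real.rpow_mul hd.le, ← Real.rpow_mul (norm_nonneg _), neg_mul]

lemma hol_testFun (β N : ℝ) {a : Cn n} (ha : a ∈ B n) : Hol (testFun β N a) := by
  intro z hz
  have hdot : Differentiable ℂ fun z : Cn n => bdot z a := by
    simp_rw [bdot_eq_inner]
    exact (innerSL ℂ a).differentiable
  refine (DifferentiableAt.const_mul ?_ _).differentiableWithinAt
  exact ((differentiableAt_const _).sub hdot.differentiableAt).cpow_const
    (one_sub_bdot_mem_slitPlane hz ha)

lemma measurable_testFun (β N : ℝ) (a : Cn n) : Measurable (testFun β N a) := by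
  unfold testFun
  simp_rw [bdot_eq_inner]
  fun_prop

lemma exists_lintegral_norm_testFun_rpow_le (n : ℕ) {p α β : ℝ} (hp : 0 < p) (hα : -1 < α)
    (hβ : 0 < β) :
    ∃ K : ENNReal, K ≠ ⊤ ∧ ∀ a ∈ B n,
      ∫⁻ z, ENNReal.ofReal (‖testFun β ((n + 1 + α) / p + β) a z‖ ^ p) ∂(vol n α) ≤ K := by
  obtain ⟨K, hK, hKa⟩ :=
    exists_forelliRudin_le (volume : Measure (Cn n)) hα (mul_pos hβ hp)
  refine ⟨K, hK, fun a ha => ?_⟩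
  have hd := one_sub_norm_sq_pos ha
  have hN : ((n + 1 + α) / p + β) * p = n + 1 + α + β * p := by
    rw [add_mul, div_mul_cancel₀ _ hp.ne']
  have hmeas := measurable_testFun β ((n + 1 + α) / p + β) a
  rw [lintegral_vol α (by fun_prop)]
  simp_rw [norm_testFun_rpow β _ p ha, hN, ENNReal.ofReal_mul (Real.rpow_nonneg hd.le _),
    mul_left_comm (truncPow _ _), bdot_eq_inner]
  rw [lintegral_const_mul _ (by fun_prop)]
  calc _ ≤ ENNReal.ofReal ((1 - ‖a‖ ^ 2) ^ (β * p)) *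
        (K * ENNReal.ofReal ((1 - ‖a‖ ^ 2) ^ (-(β * p)))) := by
        gcongr
        simpa using hKa a (mem_ball_zero_iff.1 ha)
    _ = K := by
        rw [mul_left_comm, ← ENNReal.ofReal_mul (by positivity), ← Real.rpow_add hd,
          add_neg_cancel, Real.rpow_zero, ENNReal.ofReal_one, mul_one]

lemma exists_bNorm_testFun_le (n : ℕ) {p α β : ℝ} (hp : 0 < p) (hα : -1 < α) (hβ : 0 < β) :
    ∃ K : ℝ, ∀ a ∈ B n, InBergman n p α (testFun β ((n + 1 + α) / p + β) a) ∧
      bNorm n p α (testFun β ((n + 1 + α) / p + β) a) ≤ K := by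
  obtain ⟨K, hK, hKa⟩ := exists_lintegral_norm_testFun_rpow_le n hp hα hβ
  refine ⟨K.toReal ^ (1 / p), fun a ha => ?_⟩
  set f := testFun β ((n + 1 + α) / p + β) a
  have hmeas : Measurable fun z => ‖f z‖ ^ p := (measurable_testFun _ _ a).norm.pow_const p
  have hnonneg : 0 ≤ᵐ[vol n α] fun z => ‖f z‖ ^ p := ae_of_all _ fun z => by positivity
  refine ⟨⟨hol_testFun _ _ ha, hmeas.aestronglyMeasurable, ?_⟩, ?_⟩
  · rw [hasFiniteIntegral_iff_ofReal hnonneg]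
    exact (hKa a ha).trans_lt hK.lt_top
  · rw [bNorm, integral_eq_lintegral_of_nonneg_ae hnonneg hmeas.aestronglyMeasurable]
    exact Real.rpow_le_rpow ENNReal.toReal_nonneg (ENNReal.toReal_mono hK (hKa a ha))
      (by positivity)

lemma bNorm_nonneg (n : ℕ) (p α : ℝ) (f : Cn n → ℂ) : 0 ≤ bNorm n p α f :=
  Real.rpow_nonneg (integral_nonneg fun _ => by positivity) _

lemma div_rpow_mul_div_rpow {x y a b c d : ℝ} (hx : 0 < x) (hy : 0 ≤ y) (hb : 0 ≤ b)
    (hd : 0 ≤ d) : x ^ a / y ^ b * (x ^ c / y ^ d) = x ^ (a + c) / y ^ (b + d) := by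
  rw [div_mul_div_comm, Real.rpow_add hx, Real.rpow_add_of_nonneg hy hb hd]

lemma kernel_mul_kernel {p q s t α t₁ : ℝ} (hp : 0 < p) (hq : 0 < q) (hα : -1 < α)
    (hst : 0 ≤ s + t) (ht₁ : 0 < t₁) {a : Cn n} (ha : a ∈ B n) (z : Cn n) :
    (1 - ‖a‖ ^ 2) ^ t₁ / ‖1 - bdot z a‖ ^ ((n + 1 + α) * q / p + t₁) *
        ((1 - ‖a‖ ^ 2) ^ t / ‖1 - bdot z a‖ ^ (s + t)) =
      (1 - ‖a‖ ^ 2) ^ (t + t₁) / ‖1 - bdot z a‖ ^ (s + (n + 1 + α) * q / p + t + t₁) := by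
  have hE : 0 ≤ (n + 1 + α) * q / p := by
    have : 0 ≤ n + 1 + α := by linarith [n.cast_nonneg (α := ℝ)]
    positivity
  rw [div_rpow_mul_div_rpow (one_sub_norm_sq_pos ha) (norm_nonneg _) (add_nonneg hE ht₁.le) hst]
  ring_nf

end Bergman

theorem stmt14_general (n : ℕ) {p q α C : ℝ} (hp : 0 < p) (hq : 0 < q) (hα : -1 < α)
    (μ : Measure (Cn n)) (w : Cn n → Cn n → ℝ)
    (h : ∀ f : Cn n → ℂ, InBergman n p α f → ∀ a ∈ B n,
      ∫ z, ‖f z‖ ^ q * w a z ∂μ ≤ C * bNorm n p α f ^ q) :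
    ∀ t₁ > 0, ∃ M, ∀ a ∈ B n,
      ∫ z, (1 - ‖a‖ ^ 2) ^ t₁ / ‖1 - bdot z a‖ ^ ((n + 1 + α) * q / p + t₁) * w a z ∂μ ≤ M := by
  intro t₁ ht₁
  obtain ⟨K, hK⟩ := exists_bNorm_testFun_le n hp hα (div_pos ht₁ hq)
  refine ⟨|C| * K ^ q, fun a ha => ?_⟩
  obtain ⟨hmem, hle⟩ := hK a ha
  have hexp : ((n + 1 + α) / p + t₁ / q) * q = (n + 1 + α) * q / p + t₁ := by field_simp
  have htest := h _ hmem a ha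
  simp_rw [norm_testFun_rpow _ _ q ha, div_mul_cancel₀ _ hq.ne', hexp,
    Real.rpow_neg (norm_nonneg _), ← div_eq_mul_inv] at htest
  have hnonneg := bNorm_nonneg n p α (testFun (t₁ / q) ((n + 1 + α) / p + t₁ / q) a)
  refine htest.trans ?_
  gcongr
  exact le_abs_self C

theorem stmt14 (n : ℕ) (p q s t α : ℝ) (hp : 0 < p) (hq : 0 < q) (hs : 0 < s)
    (ht : 0 < t) (hα : -1 < α) (μ : MeasureTheory.Measure (Cn n))
    (C : ℝ) (hC : 0 < C)
    (h : ∀ f : Cn n → ℂ, InBergman n p α f → ∀ a ∈ B n,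
      ∫ z, ‖f z‖ ^ q * ((1 - ‖a‖ ^ 2) ^ t / ‖(1 : ℂ) - bdot z a‖ ^ (s + t)) ∂μ ≤
        C * bNorm n p α f ^ q) :
    ∀ t₁ > 0, ∃ M, ∀ a ∈ B n,
      ∫ z, (1 - ‖a‖ ^ 2) ^ (t + t₁) /
        ‖(1 : ℂ) - bdot z a‖ ^ (s + ((n : ℝ) + 1 + α) * q / p + t + t₁) ∂μ ≤ M := by
  intro t₁ ht₁
  obtain ⟨M, hM⟩ := stmt14_general n hp hq hα μ _ h t₁ ht₁
  exact ⟨M, fun a ha => by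
    simpa only [kernel_mul_kernel hp hq hα (add_pos hs ht).le ht₁ ha] using hM a ha⟩
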